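/- Let H = (F, θ₀, θ₁, θ₂) be a connected orientable combinatorial hypermap and let A ⊆ E(H), with A^c = E(H) ∖ A. Then ε(H^A), ε(A) and ε(A^c) are all even, and the orientable genera γ(H^A) = ε(H^A)/2, γ(A) = ε(A)/2, γ(A^c) = ε(A^c)/2 satisfy γ(H^A) = γ(A) + γ(A^c) + c(H) − c(A) − c(A^c) + v(H). -/

import Mathlib

open Classical

/-- A pre-hypermap on a set of flags `F`: three structure maps `θ₀, θ₁, θ₂`.
It is a genuine combinatorial hypermap when the three maps are
fixed-point-free involutions (see `PreHypermap.IsHypermap`). -/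
structure PreHypermap (F : Type*) where
  theta : Fin 3 → F → F

namespace PreHypermap

variable {F : Type*}

/-- `H` is a combinatorial hypermap: `θ₀, θ₁, θ₂` are fixed-point-free involutions. -/
def IsHypermap (H : PreHypermap F) : Prop :=
  ∀ i : Fin 3, Function.Involutive (H.theta i) ∧ ∀ x : F, H.theta i x ≠ x

/-- The equivalence relation on `F` generated by a set of functions `F → F`;
for a set of involutions, two flags are related iff they are in the same orbit
of the subgroup generated by those involutions. -/
def orbitRel (fs : Set (F → F)) : F → F → Prop :=
  Relation.EqvGen (fun x y => ∃ f ∈ fs, f x = y)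

/-- The setoid of orbits of the subgroup generated by a set of involutions. -/
def orbitSetoid (fs : Set (F → F)) : Setoid F :=
  Relation.EqvGen.setoid (fun x y => ∃ f ∈ fs, f x = y)

/-- The number of orbits on `F` of the subgroup generated by a set of involutions. -/
noncomputable def orbitCount (fs : Set (F → F)) : ℕ :=
  Nat.card (Quotient (orbitSetoid fs))

/-- `v H`: the number of vertices, i.e. orbits of `⟨θ₁, θ₂⟩`. -/
noncomputable def v (H : PreHypermap F) : ℕ := orbitCount {H.theta 1, H.theta 2}

/-- `e H`: the number of hyperedges, i.e. orbits of `⟨θ₀, θ₂⟩`. -/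
noncomputable def e (H : PreHypermap F) : ℕ := orbitCount {H.theta 0, H.theta 2}

/-- `f H`: the number of faces, i.e. orbits of `⟨θ₀, θ₁⟩`. -/
noncomputable def f (H : PreHypermap F) : ℕ := orbitCount {H.theta 0, H.theta 1}

/-- `c H`: the number of components, i.e. orbits of `⟨θ₀, θ₁, θ₂⟩`. -/
noncomputable def c (H : PreHypermap F) : ℕ :=
  orbitCount {H.theta 0, H.theta 1, H.theta 2}

/-- `H` is connected if it has exactly one component. -/
def Connected (H : PreHypermap F) : Prop := H.c = 1

/-- The Euler characteristic `χ(H) = v + e + f - |F|/2`. -/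
noncomputable def chi (H : PreHypermap F) : ℤ :=
  (H.v : ℤ) + (H.e : ℤ) + (H.f : ℤ) - (Nat.card F : ℤ) / 2

/-- The Euler genus `ε(H) = 2 c(H) - χ(H)`. -/
noncomputable def eulerGenus (H : PreHypermap F) : ℤ := 2 * (H.c : ℤ) - H.chi

/-- `H` is orientable: there is `o : F → {+1, -1}` with `o (θᵢ x) = - o x` for all `i, x`. -/
def Orientable (H : PreHypermap F) : Prop :=
  ∃ o : F → ℤ, (∀ x : F, o x = 1 ∨ o x = -1) ∧
    ∀ (i : Fin 3) (x : F), o (H.theta i x) = - o x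

/-- The set `E(H)` of hyperedges of `H`, each hyperedge being its set of flags
(an orbit of `⟨θ₀, θ₂⟩`). -/
def edges (H : PreHypermap F) : Set (Set F) :=
  {s : Set F | ∃ x : F, s = {y : F | orbitRel {H.theta 0, H.theta 2} x y}}

/-- The geometric dual `H* = (F, θ₂, θ₁, θ₀)`. -/
def dual (H : PreHypermap F) : PreHypermap F where
  theta := fun i => H.theta (2 - i)

/-- The partial dual of `H` with respect to a set `S` of flags (interchange `θ₀` and
`θ₂` on `S`); for `A ⊆ E(H)` the partial dual `H^A` is `H.pdual (⋃₀ A)`. -/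
noncomputable def pdual (H : PreHypermap F) (S : Set F) : PreHypermap F where
  theta := fun i x =>
    if i = 1 then H.theta 1 x
    else if x ∈ S then H.theta (2 - i) x else H.theta i x

/-- `f(A)` for `A ⊆ E(H)`: the number of orbits of `⟨θ₁, θ₂^A⟩` (which equals `v(H^A)`). -/
noncomputable def subf (H : PreHypermap F) (A : Set (Set F)) : ℕ :=
  (H.pdual (⋃₀ A)).v

/-- `c(A)` for `A ⊆ E(H)`: the number of orbits of the subgroup generated by `θ₁`, `θ₂`
and the permutation equal to `θ₀` on `S(A)` and the identity elsewhere. -/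
noncomputable def subc (H : PreHypermap F) (A : Set (Set F)) : ℕ :=
  orbitCount {H.theta 1, H.theta 2, fun x => if x ∈ ⋃₀ A then H.theta 0 x else x}

/-- `χ(A) = v(A) + e(A) + f(A) - |S(A)|/2` for `A ⊆ E(H)`, where `v(A) = v(H)`,
`e(A) = |A|`, `f(A) = v(H^A)` and `S(A) = ⋃₀ A`. -/
noncomputable def subchi (H : PreHypermap F) (A : Set (Set F)) : ℤ :=
  (H.v : ℤ) + (A.ncard : ℤ) + (H.subf A : ℤ) - ((⋃₀ A).ncard : ℤ) / 2

/-- `ε(A) = 2 c(A) - χ(A)` for `A ⊆ E(H)`. -/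
noncomputable def subeps (H : PreHypermap F) (A : Set (Set F)) : ℤ :=
  2 * (H.subc A : ℤ) - H.subchi A

/-- The hyperedge set of `H` as a finset. -/
noncomputable def edgeFinset (H : PreHypermap F) [Fintype F] : Finset (Set F) :=
  (Set.toFinite H.edges).toFinset

/-- The partial-dual Euler-genus polynomial `∂ε_H(z) = Σ_{A ⊆ E(H)} z^(ε(H^A))`. -/
noncomputable def pdPoly (H : PreHypermap F) [Fintype F] : Polynomial ℕ :=
  ∑ A ∈ H.edgeFinset.powerset,
    Polynomial.X ^ ((H.pdual (⋃₀ (A : Set (Set F)))).eulerGenus).toNat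

/-- The partial-dual orientable-genus polynomial `∂Γ_H(z) = Σ_{A ⊆ E(H)} z^(ε(H^A)/2)`. -/
noncomputable def pdGammaPoly (H : PreHypermap F) [Fintype F] : Polynomial ℕ :=
  ∑ A ∈ H.edgeFinset.powerset,
    Polynomial.X ^ (((H.pdual (⋃₀ (A : Set (Set F)))).eulerGenus) / 2).toNat

/-- The join `H₁ ∨ H₂` of two hypermaps on disjoint flag sets, joining the corner
`{x, θ₁ x}` of `H₁` to the corner `{y, θ₁′ y}` of `H₂`. -/
noncomputable def join {F₁ F₂ : Type*} (H₁ : PreHypermap F₁) (H₂ : PreHypermap F₂)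
    (x : F₁) (y : F₂) : PreHypermap (F₁ ⊕ F₂) where
  theta := fun i z =>
    if i = 1 then
      if z = Sum.inl x then Sum.inr y
      else if z = Sum.inr y then Sum.inl x
      else if z = Sum.inl (H₁.theta 1 x) then Sum.inr (H₂.theta 1 y)
      else if z = Sum.inr (H₂.theta 1 y) then Sum.inl (H₁.theta 1 x)
      else Sum.map (H₁.theta 1) (H₂.theta 1) z
    else Sum.map (H₁.theta i) (H₂.theta i) z

/-- The bar-amalgamation `H₁ ⊕ H₂` of two hypermaps on disjoint flag sets, with a new
connecting hyperedge `{p, q, p', q'} = Fin 4` meeting the corner `{x, θ₁ x}` of `H₁`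
and the corner `{y, θ₁′ y}` of `H₂`. -/
noncomputable def bar {F₁ F₂ : Type*} (H₁ : PreHypermap F₁) (H₂ : PreHypermap F₂)
    (x : F₁) (y : F₂) : PreHypermap ((F₁ ⊕ F₂) ⊕ Fin 4) where
  theta := fun i z =>
    if i = 0 then
      match z with
      | .inl (.inl a) => .inl (.inl (H₁.theta 0 a))
      | .inl (.inr b) => .inl (.inr (H₂.theta 0 b))
      | .inr k => .inr (Equiv.swap (0 : Fin 4) 2 (Equiv.swap (1 : Fin 4) 3 k))
    else if i = 2 then
      match z with
      | .inl (.inl a) => .inl (.inl (H₁.theta 2 a))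
      | .inl (.inr b) => .inl (.inr (H₂.theta 2 b))
      | .inr k => .inr (Equiv.swap (0 : Fin 4) 1 (Equiv.swap (2 : Fin 4) 3 k))
    else
      if z = .inl (.inl x) then .inr 0
      else if z = .inr 0 then .inl (.inl x)
      else if z = .inl (.inl (H₁.theta 1 x)) then .inr 1
      else if z = .inr 1 then .inl (.inl (H₁.theta 1 x))
      else if z = .inl (.inr y) then .inr 2
      else if z = .inr 2 then .inl (.inr y)
      else if z = .inl (.inr (H₂.theta 1 y)) then .inr 3
      else if z = .inr 3 then .inl (.inr (H₂.theta 1 y))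
      else
        match z with
        | .inl (.inl a) => .inl (.inl (H₁.theta 1 a))
        | .inl (.inr b) => .inl (.inr (H₂.theta 1 b))
        | .inr k => .inr k

end PreHypermap

namespace PreHypermap

theorem aux_card_quot {α β : Type*} (s : Setoid α) (g : α → β)
    (h : ∀ x y, s x y ↔ g x = g y) (hs : Function.Surjective g) :
    Nat.card (Quotient s) = Nat.card β := by
  refine Nat.card_congr (Equiv.ofBijective (Quotient.lift g (fun x y hxy => (h x y).1 hxy)) ⟨?_, ?_⟩)
  · intro p q
    induction p using Quotient.inductionOn
    induction q using Quotient.inductionOn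
    intro hpq
    exact Quotient.sound ((h _ _).2 hpq)
  · intro b
    obtain ⟨x, rfl⟩ := hs b
    exact ⟨Quotient.mk _ x, rfl⟩

theorem aux_sign {α : Type*} [Fintype α] [DecidableEq α] (p : Equiv.Perm α) :
    (-1 : ℤˣ) ^ (Nat.card (Quotient (Equiv.Perm.SameCycle.setoid p)) + Nat.card α)
      = Equiv.Perm.sign p := by
  have key : Nat.card (Quotient (Equiv.Perm.SameCycle.setoid p)) =
      Nat.card (p.cycleFactorsFinset ⊕ Function.fixedPoints p) := by
    apply aux_card_quot _ (fun x => if h : p x = x then Sum.inr ⟨x, h⟩ else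
      Sum.inl ⟨p.cycleOf x, Equiv.Perm.cycleOf_mem_cycleFactorsFinset_iff.2
        (Equiv.Perm.mem_support.2 h)⟩)
    · intro x y
      change p.SameCycle x y ↔ _
      by_cases hx : p x = x <;> by_cases hy : p y = y
      · simp only [hx, hy, dif_pos, Sum.inr.injEq, Subtype.mk.injEq]
        constructor
        · intro h
          exact Subtype.ext (Equiv.Perm.SameCycle.eq_of_left h hx)
        · intro h
          have h := congrArg Subtype.val h
          simp only at h
          subst h
          exact Equiv.Perm.SameCycle.refl _ _
      · simp only [hx, hy, dif_pos, dif_neg, not_false_eq_true, reduceCtorEq, iff_false]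
        intro h
        exact hy (h.apply_eq_self_iff.1 hx)
      · simp only [hx, hy, dif_pos, dif_neg, not_false_eq_true, reduceCtorEq, iff_false]
        intro h
        exact hx (h.apply_eq_self_iff.2 hy)
      · simp only [hx, hy, dif_neg, not_false_eq_true, Sum.inl.injEq, Subtype.mk.injEq]
        exact Equiv.Perm.sameCycle_iff_cycleOf_eq_of_mem_support
          (Equiv.Perm.mem_support.2 hx) (Equiv.Perm.mem_support.2 hy)
    · rintro (⟨q, hq⟩ | ⟨x, hx⟩)
      · obtain ⟨x, hx⟩ := (Equiv.Perm.mem_cycleFactorsFinset_iff.1 hq).1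
        have hxs : x ∈ q.support := Equiv.Perm.mem_support.2 hx.1
        have h2 := Equiv.Perm.cycle_is_cycleOf hxs hq
        have h3 := Equiv.Perm.mem_cycleFactorsFinset_support_le hq hxs
        refine ⟨x, ?_⟩
        simp only [Equiv.Perm.mem_support.1 h3, dif_neg, not_false_eq_true, h2]
      · refine ⟨x, ?_⟩
        have : p x = x := hx
        simp only [this, dif_pos]
  have h1 := Equiv.Perm.card_fixedPoints p
  have h2 := p.sum_cycleType_le
  have h3 : Nat.card p.cycleFactorsFinset = Multiset.card p.cycleType := by
    rw [Equiv.Perm.cycleType_def]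
    simp
  rw [key, Nat.card_sum, h3, Equiv.Perm.sign_of_cycleType, Nat.card_eq_fintype_card,
    Nat.card_eq_fintype_card, h1]
  have : Multiset.card p.cycleType + (Fintype.card α - p.cycleType.sum) + Fintype.card α
    = p.cycleType.sum + Multiset.card p.cycleType + 2 * (Fintype.card α - p.cycleType.sum) := by
    omega
  rw [this, pow_add, pow_mul]
  simp

/-- The permutation `a b` on the positive flags. -/
def auxPerm {F : Type*} (o : F → ℤ) (a b : F → F)
    (ha : Function.Involutive a) (hb : Function.Involutive b)
    (oa : ∀ x, o (a x) = - o x) (ob : ∀ x, o (b x) = - o x) :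
    Equiv.Perm {x : F // o x = 1} where
  toFun x := ⟨a (b x), by rw [oa, ob, x.2]; rfl⟩
  invFun x := ⟨b (a x), by rw [ob, oa, x.2]; rfl⟩
  left_inv x := by ext; simp [ha _, hb _]
  right_inv x := by ext; simp [ha _, hb _]

theorem aux_orbit_sign {F : Type*} [Fintype F] (o : F → ℤ) (o1 : ∀ x, o x = 1 ∨ o x = -1)
    (a b : F → F)
    (ha : Function.Involutive a) (hb : Function.Involutive b)
    (oa : ∀ x, o (a x) = - o x) (ob : ∀ x, o (b x) = - o x) :
    (-1 : ℤˣ) ^ (orbitCount {a, b} + Nat.card {x : F // o x = 1})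
      = Equiv.Perm.sign (auxPerm o a b ha hb oa ob) := by
  rw [← aux_sign]
  congr 2
  set p := auxPerm o a b ha hb oa ob with hp
  have pdef : ∀ x, ((p x : {x : F // o x = 1}) : F) = a (b x) := fun x => rfl
  have neg : ∀ x, ¬ o x = 1 → o (b x) = 1 := by
    intro x hx
    rw [ob, (o1 x).resolve_left hx]; rfl
  have stepa : ∀ x, orbitSetoid {a, b} x (a x) := fun x => .rel _ _ ⟨a, by simp, rfl⟩
  have stepb : ∀ x, orbitSetoid {a, b} x (b x) := fun x => .rel _ _ ⟨b, by simp, rfl⟩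
  have stepp : ∀ x : {x : F // o x = 1}, orbitSetoid {a, b} (x : F) (p x : F) := fun x =>
    (orbitSetoid {a, b}).trans (stepb x) (stepa _)
  have same : ∀ x y, p.SameCycle x y → orbitSetoid {a, b} (x : F) (y : F) := by
    intro x y h
    obtain ⟨n, hn⟩ := h.exists_nat_pow_eq
    subst hn
    clear h
    induction n with
    | zero => exact (orbitSetoid {a, b}).refl _
    | succ n ih =>
      rw [pow_succ', Equiv.Perm.mul_apply]
      exact (orbitSetoid {a, b}).trans ih (stepp _)
  apply aux_card_quot _ (fun x => if h : o x = 1 then Quotient.mk (Equiv.Perm.SameCycle.setoid p)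
    ⟨x, h⟩ else Quotient.mk _ ⟨b x, neg x h⟩)
  · intro x y
    constructor
    · intro h
      induction h with
      | rel x y h =>
        obtain ⟨f, hf, rfl⟩ := h
        rcases hf with rfl | rfl
        · by_cases hx : o x = 1
          · have : ¬ o (f x) = 1 := by rw [oa, hx]; decide
            simp only [hx, this, dif_pos, dif_neg, not_false_eq_true]
            apply Quotient.sound
            change p.SameCycle _ _
            refine Equiv.Perm.SameCycle.symm ⟨1, ?_⟩
            ext
            simp [pdef, ha _, hb _]
          · have : o (f x) = 1 := by rw [oa, (o1 x).resolve_left hx]; rfl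
            simp only [hx, this, dif_pos, dif_neg, not_false_eq_true]
            apply Quotient.sound
            change p.SameCycle _ _
            refine ⟨1, ?_⟩
            ext
            simp [pdef, hb _]
        · by_cases hx : o x = 1
          · have : ¬ o (f x) = 1 := by rw [ob, hx]; decide
            simp only [hx, this, dif_pos, dif_neg, not_false_eq_true, hb _]
          · have : o (f x) = 1 := neg x hx
            simp only [hx, this, dif_pos, dif_neg, not_false_eq_true]
      | refl x => rfl
      | symm x y _ ih => exact ih.symm
      | trans x y z _ _ ih1 ih2 => exact ih1.trans ih2
    · intro h
      by_cases hx : o x = 1 <;> by_cases hy : o y = 1 <;>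
        simp only [hx, hy, dif_pos, dif_neg, not_false_eq_true] at h <;>
        have h2 := same _ _ (Quotient.exact h)
      · exact h2
      · exact (orbitSetoid {a, b}).trans h2 ((orbitSetoid {a, b}).symm (stepb y))
      · exact (orbitSetoid {a, b}).trans (stepb x) h2
      · exact (orbitSetoid {a, b}).trans (stepb x)
          ((orbitSetoid {a, b}).trans h2 ((orbitSetoid {a, b}).symm (stepb y)))
  · intro q
    induction q using Quotient.inductionOn with
    | h x => exact ⟨x, by simp only [x.2, dif_pos]⟩

theorem aux_parity {F : Type*} [Fintype F] (o : F → ℤ) (o1 : ∀ x, o x = 1 ∨ o x = -1)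
    (a b c : F → F)
    (ha : Function.Involutive a) (hb : Function.Involutive b) (hc : Function.Involutive c)
    (oa : ∀ x, o (a x) = - o x) (ob : ∀ x, o (b x) = - o x) (oc : ∀ x, o (c x) = - o x) :
    Even (orbitCount {a, b} + orbitCount {b, c} + orbitCount {c, a}
      + Nat.card {x : F // o x = 1}) := by
  have h1 := aux_orbit_sign o o1 a b ha hb oa ob
  have h2 := aux_orbit_sign o o1 b c hb hc ob oc
  have h3 := aux_orbit_sign o o1 c a hc ha oc oa
  have h4 : auxPerm o a b ha hb oa ob * auxPerm o b c hb hc ob oc * auxPerm o c a hc ha oc oa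
      = 1 := by
    ext x
    simp [auxPerm, ha _, hb _, hc _]
  have h5 := congrArg Equiv.Perm.sign h4
  rw [map_mul, map_mul, map_one, ← h1, ← h2, ← h3, ← pow_add, ← pow_add] at h5
  have h6 := (neg_one_pow_eq_one_iff_even (R := ℤˣ) (by decide)).1 h5
  grind

theorem aux_half {F : Type*} [Fintype F] (o : F → ℤ) (o1 : ∀ x, o x = 1 ∨ o x = -1)
    (t : F → F) (ht : Function.Involutive t) (ot : ∀ x, o (t x) = - o x)
    (T : Set F) (hT : ∀ x ∈ T, t x ∈ T) :
    T.ncard = 2 * Nat.card {x : F // x ∈ T ∧ o x = 1} := by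
  have e1 : T = {x | x ∈ T ∧ o x = 1} ∪ t '' {x | x ∈ T ∧ o x = 1} := by
    ext x
    constructor
    · intro hx
      rcases o1 x with h | h
      · exact Or.inl ⟨hx, h⟩
      · exact Or.inr ⟨t x, ⟨hT x hx, by rw [ot, h]; rfl⟩, ht x⟩
    · rintro (h | ⟨y, hy, rfl⟩)
      · exact h.1
      · exact hT _ hy.1
  have d : Disjoint {x | x ∈ T ∧ o x = 1} (t '' {x | x ∈ T ∧ o x = 1}) := by
    rw [Set.disjoint_left]
    rintro _ h ⟨y, hy, rfl⟩
    have h1 := h.2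
    rw [ot, hy.2] at h1
    exact absurd h1 (by decide)
  have e2 := congrArg Set.ncard e1
  rw [Set.ncard_union_eq d, Set.ncard_image_of_injective _ ht.injective] at e2
  have e3 : Nat.card {x : F // x ∈ T ∧ o x = 1} = {x | x ∈ T ∧ o x = 1}.ncard := rfl
  omega

variable {F : Type} [Fintype F]

theorem aux_class_eq (H : PreHypermap F) (x y : F) :
    orbitSetoid {H.theta 0, H.theta 2} x y ↔
      {z : F | orbitRel {H.theta 0, H.theta 2} x z} = {z | orbitRel {H.theta 0, H.theta 2} y z} := by
  constructor
  · intro h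
    ext z
    exact ⟨fun h2 => .trans _ _ _ (.symm _ _ h) h2, fun h2 => .trans _ _ _ h h2⟩
  · intro h
    have : y ∈ {z | orbitRel {H.theta 0, H.theta 2} y z} := .refl y
    rw [← h] at this
    exact this

theorem aux_mem (H : PreHypermap F) {A : Set (Set F)} (hA : A ⊆ H.edges) (x : F) :
    x ∈ ⋃₀ A ↔ {z : F | orbitRel {H.theta 0, H.theta 2} x z} ∈ A := by
  constructor
  · rintro ⟨s, hs, hx⟩
    obtain ⟨w, rfl⟩ := hA hs
    rwa [← (aux_class_eq H w x).1 hx]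
  · intro h
    exact ⟨_, h, .refl x⟩

theorem aux_mem_congr (H : PreHypermap F) {A : Set (Set F)} (hA : A ⊆ H.edges) {x y : F}
    (h : orbitRel {H.theta 0, H.theta 2} x y) : x ∈ ⋃₀ A ↔ y ∈ ⋃₀ A := by
  rw [aux_mem H hA, aux_mem H hA, (aux_class_eq H x y).1 h]

theorem aux_compl (H : PreHypermap F) {A : Set (Set F)} (hA : A ⊆ H.edges) :
    ⋃₀ (H.edges \ A) = (⋃₀ A)ᶜ := by
  ext x
  rw [Set.mem_compl_iff, aux_mem H hA, aux_mem H Set.sdiff_subset, Set.mem_sdiff]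
  exact ⟨fun h => h.2, fun h => ⟨⟨x, rfl⟩, h⟩⟩

theorem aux_mem_theta (H : PreHypermap F) {A : Set (Set F)} (hA : A ⊆ H.edges) (i : Fin 3)
    (hi : i = 0 ∨ i = 2) (x : F) : H.theta i x ∈ ⋃₀ A ↔ x ∈ ⋃₀ A := by
  refine (aux_mem_congr H hA (.rel _ _ ⟨H.theta i, ?_, rfl⟩)).symm
  rcases hi with rfl | rfl <;> simp

theorem aux_invol (H : PreHypermap F) (hH : H.IsHypermap) {A : Set (Set F)} (hA : A ⊆ H.edges)
    (i : Fin 3) : Function.Involutive ((H.pdual (⋃₀ A)).theta i) := by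
  intro x
  have h0 := aux_mem_theta H hA 0 (by simp) x
  have h2 := aux_mem_theta H hA 2 (by simp) x
  have i0 := (hH 0).1 x
  have i1 := (hH 1).1 x
  have i2 := (hH 2).1 x
  generalize ⋃₀ A = S at *
  by_cases hx : x ∈ S <;> fin_cases i <;> simp_all [pdual]

theorem aux_or (H : PreHypermap F) (S : Set F) (o : F → ℤ)
    (ho : ∀ (i : Fin 3) (x : F), o (H.theta i x) = - o x) (i : Fin 3) (x : F) :
    o ((H.pdual S).theta i x) = - o x := by
  simp only [pdual]
  split_ifs <;> apply ho

theorem aux_count_congr (fs gs : Set (F → F))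
    (h : ∀ x y, (∃ f ∈ fs, f x = y) ↔ (∃ f ∈ gs, f x = y)) : orbitCount fs = orbitCount gs := by
  have : (fun x y => ∃ f ∈ fs, f x = y) = (fun x y => ∃ f ∈ gs, f x = y) := by
    ext x y; exact h x y
  unfold orbitCount orbitSetoid
  rw [this]

theorem aux_e (H : PreHypermap F) (S : Set F) : (H.pdual S).e = H.e := by
  apply aux_count_congr
  intro x y
  by_cases hx : x ∈ S <;> simp [pdual, hx, or_comm]

theorem aux_c (H : PreHypermap F) (S : Set F) : (H.pdual S).c = H.c := by
  apply aux_count_congr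
  intro x y
  by_cases hx : x ∈ S <;> simp [pdual, hx]
  tauto

theorem aux_f (H : PreHypermap F) (S : Set F) : (H.pdual S).f = (H.pdual Sᶜ).v := by
  apply aux_count_congr
  intro x y
  by_cases hx : x ∈ S <;> simp [pdual, hx, or_comm]

theorem aux_edges (H : PreHypermap F) : H.e = H.edges.ncard := by
  have : H.edges.ncard = Nat.card H.edges := rfl
  rw [this]
  apply aux_card_quot _ (fun x => (⟨{z : F | orbitRel {H.theta 0, H.theta 2} x z}, x, rfl⟩ : H.edges))
  · intro x y
    rw [Subtype.ext_iff]
    exact aux_class_eq H x y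
  · rintro ⟨s, x, rfl⟩
    exact ⟨x, rfl⟩

theorem aux_mixed (H : PreHypermap F) (hH : H.IsHypermap) {A : Set (Set F)} (hA : A ⊆ H.edges)
    (o : F → ℤ) (o1 : ∀ x, o x = 1 ∨ o x = -1)
    (ho : ∀ (i : Fin 3) (x : F), o (H.theta i x) = - o x) :
    orbitCount {H.theta 2, (H.pdual (⋃₀ A)).theta 2} =
      A.ncard + Nat.card {x : F // x ∈ (⋃₀ A)ᶜ ∧ o x = 1} := by
  have : A.ncard = Nat.card A := rfl
  rw [this, ← Nat.card_sum]
  have hp : ∀ x, x ∈ ⋃₀ A → (H.pdual (⋃₀ A)).theta 2 x = H.theta 0 x := by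
    intro x hx; simp only [pdual, hx]; simp
  have hn : ∀ x, x ∉ ⋃₀ A → (H.pdual (⋃₀ A)).theta 2 x = H.theta 2 x := by
    intro x hx; simp only [pdual, hx]; simp
  have m0 := aux_mem_theta H hA 0 (by simp)
  have m2 := aux_mem_theta H hA 2 (by simp)
  let r := orbitSetoid {H.theta 2, (H.pdual (⋃₀ A)).theta 2}
  have step2 : ∀ x, r x (H.theta 2 x) := fun x => .rel _ _ ⟨_, by simp, rfl⟩
  have stepp : ∀ x, r x ((H.pdual (⋃₀ A)).theta 2 x) := fun x => .rel _ _ ⟨_, by simp, rfl⟩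
  have neg : ∀ x, ¬ o x = 1 → o (H.theta 2 x) = 1 := by
    intro x hx
    rw [ho, (o1 x).resolve_left hx]; rfl
  have up : ∀ x y, orbitRel {H.theta 0, H.theta 2} x y → x ∈ ⋃₀ A → r x y := by
    intro x y h
    induction h with
    | rel x y h =>
      intro hx
      obtain ⟨f, hf, rfl⟩ := h
      rcases hf with rfl | rfl
      · rw [← hp x hx]; exact stepp x
      · exact step2 x
    | refl x => intro _; exact r.refl _
    | symm x y h ih => intro hy; exact r.symm (ih ((aux_mem_congr H hA h).2 hy))
    | trans x y z h1 h2 ih1 ih2 =>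
      intro hx
      exact r.trans (ih1 hx) (ih2 ((aux_mem_congr H hA h1).1 hx))
  let g : F → A ⊕ {x : F // x ∈ (⋃₀ A)ᶜ ∧ o x = 1} := fun x =>
    if hx : x ∈ ⋃₀ A then Sum.inl ⟨_, (aux_mem H hA x).1 hx⟩
    else if h : o x = 1 then Sum.inr ⟨x, hx, h⟩
    else Sum.inr ⟨H.theta 2 x, fun h2 => hx ((m2 x).1 h2), neg x h⟩
  have g1 : ∀ x (hx : x ∈ ⋃₀ A), g x = Sum.inl ⟨_, (aux_mem H hA x).1 hx⟩ := by
    intro x hx; simp only [g, hx, dif_pos]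
  have g2 : ∀ x (hx : x ∉ ⋃₀ A) (h : o x = 1), g x = Sum.inr ⟨x, hx, h⟩ := by
    intro x hx h; simp only [g, hx, h, dif_pos, dif_neg, not_false_eq_true]
  have g3 : ∀ x (hx : x ∉ ⋃₀ A) (h : ¬ o x = 1),
      g x = Sum.inr ⟨H.theta 2 x, fun h2 => hx ((m2 x).1 h2), neg x h⟩ := by
    intro x hx h; simp only [g, hx, h, dif_neg, not_false_eq_true]
  have gA : ∀ x y, x ∈ ⋃₀ A → orbitRel {H.theta 0, H.theta 2} x y → g x = g y := by
    intro x y hx h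
    rw [g1 x hx, g1 y ((aux_mem_congr H hA h).1 hx)]
    simp only [Sum.inl.injEq, Subtype.mk.injEq]
    exact (aux_class_eq H x y).1 h
  have gB : ∀ x, x ∉ ⋃₀ A → g x = g (H.theta 2 x) := by
    intro x hx
    have hx2 : H.theta 2 x ∉ ⋃₀ A := fun h2 => hx ((m2 x).1 h2)
    by_cases h : o x = 1
    · have h' : ¬ o (H.theta 2 x) = 1 := by rw [ho, h]; decide
      rw [g2 x hx h, g3 _ hx2 h']
      simp only [(hH 2).1 x]
    · rw [g3 x hx h, g2 _ hx2 (neg x h)]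
  apply aux_card_quot _ g
  · intro x y
    constructor
    · intro h
      induction h with
      | rel x y h =>
        obtain ⟨f, hf, rfl⟩ := h
        by_cases hx : x ∈ ⋃₀ A
        · rcases hf with rfl | rfl
          · exact gA _ _ hx (.rel _ _ ⟨_, by simp, rfl⟩)
          · rw [hp x hx]
            exact gA _ _ hx (.rel _ _ ⟨_, by simp, rfl⟩)
        · rcases hf with rfl | rfl
          · exact gB x hx
          · rw [hn x hx]; exact gB x hx
      | refl x => rfl
      | symm x y _ ih => exact ih.symm
      | trans x y z _ _ ih1 ih2 => exact ih1.trans ih2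
    · intro h
      change r x y
      by_cases hx : x ∈ ⋃₀ A <;> by_cases hy : y ∈ ⋃₀ A
      · rw [g1 x hx, g1 y hy] at h
        simp only [Sum.inl.injEq, Subtype.mk.injEq] at h
        exact up x y ((aux_class_eq H x y).2 h) hx
      · rw [g1 x hx] at h
        by_cases h' : o y = 1
        · rw [g2 y hy h'] at h; cases h
        · rw [g3 y hy h'] at h; cases h
      · rw [g1 y hy] at h
        by_cases h' : o x = 1
        · rw [g2 x hx h'] at h; cases h
        · rw [g3 x hx h'] at h; cases h
      · by_cases h1 : o x = 1 <;> by_cases h2 : o y = 1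
        · rw [g2 x hx h1, g2 y hy h2] at h
          simp only [Sum.inr.injEq, Subtype.mk.injEq] at h
          rw [h]
        · rw [g2 x hx h1, g3 y hy h2] at h
          simp only [Sum.inr.injEq, Subtype.mk.injEq] at h
          rw [h]; exact r.symm (step2 y)
        · rw [g3 x hx h1, g2 y hy h2] at h
          simp only [Sum.inr.injEq, Subtype.mk.injEq] at h
          rw [← h]; exact step2 x
        · rw [g3 x hx h1, g3 y hy h2] at h
          simp only [Sum.inr.injEq, Subtype.mk.injEq] at h
          rw [(hH 2).1.injective h]
  · rintro (⟨s, hs⟩ | ⟨x, hx, h⟩)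
    · obtain ⟨x, rfl⟩ := hA hs
      exact ⟨x, g1 x ((aux_mem H hA x).2 hs)⟩
    · exact ⟨x, g2 x hx h⟩

theorem aux_even_sub (H : PreHypermap F) (hH : H.IsHypermap) {A : Set (Set F)} (hA : A ⊆ H.edges)
    (o : F → ℤ) (o1 : ∀ x, o x = 1 ∨ o x = -1)
    (ho : ∀ (i : Fin 3) (x : F), o (H.theta i x) = - o x) : Even (H.subeps A) := by
  have h1 := aux_parity o o1 (H.theta 1) (H.theta 2) ((H.pdual (⋃₀ A)).theta 2) (hH 1).1 (hH 2).1
    (aux_invol H hH hA 2) (ho 1) (ho 2) (aux_or H _ o ho 2)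
  rw [aux_mixed H hH hA o o1 ho] at h1
  have h2 := aux_half o o1 (H.theta 2) (hH 2).1 (ho 2) Set.univ (fun _ _ => trivial)
  have h3 := aux_half o o1 (H.theta 2) (hH 2).1 (ho 2) (⋃₀ A)ᶜ
    (fun x hx h => hx ((aux_mem_theta H hA 2 (by simp) x).1 h))
  have h4 := Set.ncard_add_ncard_compl (⋃₀ A)
  rw [Set.ncard_univ] at h2
  simp only [Set.mem_univ, true_and] at h2
  have h5 : orbitCount {(H.pdual (⋃₀ A)).theta 2, H.theta 1} = H.subf A := by
    unfold subf v
    rw [Set.pair_comm]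
    rfl
  have h6 : orbitCount {H.theta 1, H.theta 2} = H.v := rfl
  rw [h5, h6] at h1
  unfold subeps subchi
  rw [Int.even_iff]
  rw [Nat.even_iff] at h1
  omega

end PreHypermap

open PreHypermap in
/-- Orientable-genus formula for the partial dual: `ε(H^A)`, `ε(A)`, `ε(A^c)` are even and
`γ(H^A) = γ(A) + γ(A^c) + c(H) - c(A) - c(A^c) + v(H)`, where `γ = ε / 2`. -/
theorem statement_2 {F : Type} [Fintype F] (H : PreHypermap F)
    (hH : H.IsHypermap) (hconn : H.Connected) (hor : H.Orientable)
    (A : Set (Set F)) (hA : A ⊆ H.edges) :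
    Even (H.pdual (⋃₀ A)).eulerGenus ∧
    Even (H.subeps A) ∧ Even (H.subeps (H.edges \ A)) ∧
    (H.pdual (⋃₀ A)).eulerGenus / 2 =
      H.subeps A / 2 + H.subeps (H.edges \ A) / 2
        + (H.c : ℤ) - (H.subc A : ℤ) - (H.subc (H.edges \ A) : ℤ) + (H.v : ℤ) := by
  obtain ⟨o, o1, ho⟩ := hor
  have E1 := aux_even_sub H hH hA o o1 ho
  have E2 := aux_even_sub H hH (A := H.edges \ A) Set.sdiff_subset o o1 ho
  have p := aux_parity o o1 _ _ _ (aux_invol H hH hA 1) (aux_invol H hH hA 2)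
    (aux_invol H hH hA 0) (aux_or H _ o ho 1) (aux_or H _ o ho 2) (aux_or H _ o ho 0)
  rw [Set.pair_comm ((H.pdual (⋃₀ A)).theta 2)] at p
  change Even ((H.pdual (⋃₀ A)).v + (H.pdual (⋃₀ A)).e + (H.pdual (⋃₀ A)).f + _) at p
  have h2 := aux_half o o1 (H.theta 2) (hH 2).1 (ho 2) Set.univ (fun _ _ => trivial)
  have h3 := aux_half o o1 (H.theta 2) (hH 2).1 (ho 2) (⋃₀ A)ᶜ
    (fun x hx h => hx ((aux_mem_theta H hA 2 (by simp) x).1 h))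
  have h4 := Set.ncard_add_ncard_compl (⋃₀ A)
  rw [Set.ncard_univ] at h2
  simp only [Set.mem_univ, true_and] at h2
  have hc := aux_c H (⋃₀ A)
  have he := aux_e H (⋃₀ A)
  have hf := aux_f H (⋃₀ A)
  have hcard := Set.ncard_sdiff_add_ncard_of_subset hA
  rw [← aux_edges] at hcard
  unfold subeps subchi subf at *
  unfold eulerGenus chi
  rw [aux_compl H hA] at E2 ⊢
  simp only [Int.even_iff] at E1 E2 ⊢
  rw [Nat.even_iff] at p
  omega
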